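/- arXiv:1212.5785 — 2 statements merged into one kernel-verified Lean document; each statement's English description precedes it below -/
import Mathlib

section
/- Let G be a finite non-abelian simple group. Then the only conjugacy class of G whose cardinality is a prime power (including 1) is the class {1}. -/
/-!
Let `g ≠ 1` have a conjugacy class of prime power size `p ^ k`, and suppose that no proper
normal subgroup contains all commutators `⁅g, x⁆`. Decompose `ℂ[G]` as `∏ i, M_{d i}(ℂ)` and let
`e i` be the `i`-th projection. For `a : ℂ[G]`, the trace of left multiplication by `a` is both
`∑ i, d i * tr (e i a)` and `|G|` times the coefficient of `a` at `1`. Take `a = g - c`, where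
`c` is the average of all group elements: the second expression is `-1`, while each summand of
the first is `p` times an algebraic integer, so `1 / p` would be an algebraic integer.

To see the divisibility, note that a central element acts on a component by a scalar, so `c`
acts as `1` if `G` acts trivially and as `0` otherwise. On the trivial component `g - c`
therefore acts as `0`; on any other the summand is `d i * tr (e i g)`, and either `p ∣ d i` or
`d i` is coprime to the class size. In the latter case the class sum of `g` shows that
`tr (e i g) / d i`, an average of roots of unity, is an algebraic integer, so `tr (e i g) = 0`
or `e i g` is scalar. A scalar `e i g` would put all `⁅g, x⁆` in the kernel of `e i` on `G`,
forcing `G` to act trivially.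
-/

section RootsOfUnity

variable {E : Type*}

theorem norm_multiset_sum_le_card_mul [SeminormedAddCommGroup E] {s : Multiset E} {r : ℝ}
    (hs : ∀ x ∈ s, ‖x‖ ≤ r) : ‖s.sum‖ ≤ s.card * r := by
  have hmap : (s.map (‖·‖)).sum ≤ (s.map (‖·‖)).card • r :=
    Multiset.sum_le_card_nsmul _ _ (by simpa using hs)
  rw [Multiset.card_map, nsmul_eq_mul] at hmap
  exact (norm_multiset_sum_le s).trans hmap

theorem eq_of_norm_multiset_sum_eq_card_mul [NormedAddCommGroup E] [NormedSpace ℝ E]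
    [StrictConvexSpace ℝ E] {s : Multiset E} {r : ℝ} (hs : ∀ x ∈ s, ‖x‖ = r)
    (hsum : ‖s.sum‖ = s.card * r) {x y : E} (hx : x ∈ s) (hy : y ∈ s) : x = y := by
  by_cases hxy : y = x
  · exact hxy.symm
  obtain ⟨t, rfl⟩ := Multiset.exists_cons_of_mem hx
  obtain ⟨u, rfl⟩ := Multiset.exists_cons_of_mem ((Multiset.mem_cons.1 hy).resolve_left hxy)
  have hu : ‖u.sum‖ ≤ u.card * r := norm_multiset_sum_le_card_mul
    fun z hz ↦ (hs z (by simp [hz])).le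
  have hsplit : ‖x + y + u.sum‖ ≤ ‖x + y‖ + ‖u.sum‖ := norm_add_le _ _
  simp only [Multiset.sum_cons, Multiset.card_cons, ← add_assoc] at hsum
  push_cast at hsum
  have hnx := hs x hx
  have hny := hs y hy
  exact eq_of_norm_eq_of_norm_add_eq (hnx.trans hny.symm)
    (le_antisymm (norm_add_le x y) (by linarith))

theorem sum_eq_zero_or_forall_eq_of_isIntegral_average_numberField {K : Type*}
    [Field K] [NumberField K] {n : ℕ} (hn : n ≠ 0) {s : Multiset K} (hs : ∀ x ∈ s, x ^ n = 1)
    {α : K} (hα : IsIntegral ℤ α) (hsum : s.card * α = s.sum) :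
    s.sum = 0 ∨ ∀ x ∈ s, ∀ y ∈ s, x = y := by
  refine or_iff_not_imp_left.2 fun hne ↦ ?_
  have hcard : (s.card : ℝ) ≠ 0 := fun h ↦ hne (by
    rw [← hsum, Nat.cast_eq_zero.1 h, Nat.cast_zero, zero_mul])
  have hα0 : α ≠ 0 := by rintro rfl; exact hne (by rw [← hsum, mul_zero])
  have hroot (φ : K →+* ℂ) {x : K} {k : ℕ} (hk : k ≠ 0) (hx : x ^ k = 1) : ‖φ x‖ = 1 :=
    Complex.norm_eq_one_of_pow_eq_one (by rw [← map_pow, hx, map_one]) hk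
  have hnorm (φ : K →+* ℂ) : ∀ z ∈ s.map φ, ‖z‖ = 1 := by
    simpa only [Multiset.mem_map, forall_exists_index, and_imp, forall_apply_eq_imp_iff₂]
      using fun x hx ↦ hroot φ hn (hs x hx)
  have hφsum (φ : K →+* ℂ) : ‖(s.map φ).sum‖ = s.card * ‖φ α‖ := by
    rw [← map_multiset_sum, ← hsum, map_mul, map_natCast, norm_mul, Complex.norm_natCast]
  have hle (φ : K →+* ℂ) : ‖φ α‖ ≤ 1 := by
    have := norm_multiset_sum_le_card_mul fun z hz ↦ (hnorm φ z hz).le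
    rw [hφsum, Multiset.card_map] at this
    exact le_of_mul_le_mul_left this (by positivity)
  -- Kronecker: all conjugates of `α` have norm at most `1`, so `α` is a root of unity, and the
  -- triangle inequality for `s.sum` is an equality.
  obtain ⟨m, hm, hαm⟩ := NumberField.Embeddings.pow_eq_one_of_norm_le_one K ℂ hα0 hα hle
  obtain ⟨φ⟩ : Nonempty (K →+* ℂ) := inferInstance
  refine fun x hx y hy ↦ φ.injective (eq_of_norm_multiset_sum_eq_card_mul (hnorm φ) ?_
    (Multiset.mem_map_of_mem φ hx) (Multiset.mem_map_of_mem φ hy))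
  rw [hφsum, hroot φ hm.ne' hαm, Multiset.card_map]

variable {K : Type*} [Field K] [CharZero K]

theorem exists_numberField_intermediateField_forall_mem {s : Set K} (hfin : s.Finite)
    (hs : ∀ x ∈ s, IsIntegral ℚ x) :
    ∃ F : IntermediateField ℚ K, NumberField F ∧ ∀ x ∈ s, x ∈ F := by
  have := hfin.to_subtype
  have := IntermediateField.finiteDimensional_adjoin hs
  exact ⟨IntermediateField.adjoin ℚ s, { }, fun x hx ↦ IntermediateField.subset_adjoin ℚ s hx⟩

theorem sum_eq_zero_or_forall_eq_of_isIntegral_average {n : ℕ} (hn : n ≠ 0) {s : Multiset K}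
    (hs : ∀ x ∈ s, x ^ n = 1) {α : K} (hα : IsIntegral ℤ α) (hsum : s.card * α = s.sum) :
    s.sum = 0 ∨ ∀ x ∈ s, ∀ y ∈ s, x = y := by
  rcases eq_or_ne s 0 with rfl | hs0
  · simp
  have hcard : (s.card : K) ≠ 0 := Nat.cast_ne_zero.2 (mt Multiset.card_eq_zero.1 hs0)
  obtain ⟨F, _, hsF⟩ := exists_numberField_intermediateField_forall_mem (s := {x | x ∈ s})
    s.finite_toSet fun x hx ↦ .of_pow (Nat.pos_of_ne_zero hn) (hs x hx ▸ isIntegral_one)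
  have hαF : α ∈ F := by
    rw [← mul_div_cancel_left₀ α hcard, hsum]
    exact div_mem (multiset_sum_mem _ hsF) (natCast_mem F _)
  lift s to Multiset F using hsF
  lift α to F using hαF
  have hcoe : (s.map ((↑) : F → K)).sum = s.sum := (map_multiset_sum F.val s).symm
  simp only [Multiset.mem_map, forall_exists_index, and_imp, forall_apply_eq_imp_iff₂,
    Multiset.card_map, hcoe] at hs hsum ⊢
  exact_mod_cast sum_eq_zero_or_forall_eq_of_isIntegral_average_numberField hn (s := s) (α := α)
    (by exact_mod_cast hs) (IntermediateField.coe_isIntegral_iff.1 hα) (by exact_mod_cast hsum)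

theorem not_isIntegral_inv_natCast {n : ℕ} (hn : 1 < n) : ¬ IsIntegral ℤ (n : K)⁻¹ := by
  intro h
  have hcast : algebraMap ℚ K (n : ℚ)⁻¹ = (n : K)⁻¹ := by simp
  rw [← hcast, isIntegral_algebraMap_iff (algebraMap ℚ K).injective] at h
  obtain ⟨m, hm⟩ := IsIntegrallyClosed.isIntegral_iff.1 h
  have hmn : m * n = 1 := by
    have : (m : ℚ) * n = 1 := by
      rw [show (m : ℚ) = (n : ℚ)⁻¹ from hm, inv_mul_cancel₀ (by positivity)]
    exact_mod_cast this
  exact hn.ne' (by exact_mod_cast Int.eq_one_of_mul_eq_one_left (by positivity) hmn)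

end RootsOfUnity

section Matrix

open Polynomial

variable {ι : Type*} [Fintype ι] [DecidableEq ι] {K : Type*} [Field K]

theorem aeval_eq_zero_of_mem_roots_charpoly {R : Type*} [CommRing R] [Algebra R K]
    {M : Matrix ι ι K} {f : R[X]} (hf : aeval M f = 0) {x : K} (hx : x ∈ M.charpoly.roots) :
    aeval x f = 0 := by
  have hspec : x ∈ spectrum K M :=
    Matrix.mem_spectrum_iff_isRoot_charpoly.2 (isRoot_of_mem_roots hx)
  have heval : (f.map (algebraMap R K)).eval x ∈
      spectrum K (aeval M (f.map (algebraMap R K))) :=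
    spectrum.subset_polynomial_aeval M _ ⟨x, hspec, rfl⟩
  rw [aeval_map_algebraMap, hf, eval_map_algebraMap] at heval
  by_contra hne
  exact heval (spectrum.mem_resolventSet_iff.2
    (by simpa using (IsUnit.mk0 _ hne).map (algebraMap K (Matrix ι ι K))))

theorem isIntegral_trace_of_isIntegral [IsAlgClosed K] {R : Type*} [CommRing R] [Algebra R K]
    {M : Matrix ι ι K} (hM : IsIntegral R M) : IsIntegral R M.trace := by
  obtain ⟨f, hf, hfM⟩ := hM
  rw [Matrix.trace_eq_sum_roots_charpoly]
  exact .multiset_sum fun x hx ↦ ⟨f, hf, aeval_eq_zero_of_mem_roots_charpoly hfM hx⟩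

theorem pow_eq_one_of_mem_roots_charpoly {M : Matrix ι ι K} {n : ℕ} (hM : M ^ n = 1) {x : K}
    (hx : x ∈ M.charpoly.roots) : x ^ n = 1 := by
  have hf : aeval M (X ^ n - 1 : K[X]) = 0 := by simp [hM]
  simpa [sub_eq_zero] using aeval_eq_zero_of_mem_roots_charpoly hf hx

theorem eq_algebraMap_of_pow_eq_one_of_charpoly_eq {M : Matrix ι ι K} {n : ℕ} (hn : (n : K) ≠ 0)
    (hM : M ^ n = 1) {c : K} {m : ℕ} (hc : M.charpoly = (X - C c) ^ m) :
    M = algebraMap K (Matrix ι ι K) c := by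
  have hsq : Squarefree (minpoly K M) :=
    (X_pow_sub_one_separable_iff.2 hn).squarefree.squarefree_of_dvd
      (minpoly.dvd K M (by simp [hM]))
  have hdvd : minpoly K M ∣ X - C c :=
    hsq.isRadical m _ (hc ▸ Matrix.minpoly_dvd_charpoly M)
  have haeval : aeval M (X - C c) = 0 := aeval_eq_zero_of_dvd_aeval_eq_zero hdvd (minpoly.aeval K M)
  simpa [sub_eq_zero] using haeval

theorem trace_eq_zero_or_mem_center_of_pow_eq_one [CharZero K] [IsAlgClosed K]
    {M : Matrix ι ι K} {n : ℕ} (hn : n ≠ 0) (hM : M ^ n = 1) {α : K} (hα : IsIntegral ℤ α)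
    (htrace : Fintype.card ι * α = M.trace) :
    M.trace = 0 ∨ M ∈ Subalgebra.center K (Matrix ι ι K) := by
  have hsplits : M.charpoly.Splits := IsAlgClosed.splits _
  have hcard : M.charpoly.roots.card = Fintype.card ι := by
    rw [← hsplits.natDegree_eq_card_roots, Matrix.charpoly_natDegree_eq_dim]
  rw [Matrix.trace_eq_sum_roots_charpoly] at htrace ⊢
  refine (sum_eq_zero_or_forall_eq_of_isIntegral_average hn
    (fun _ ↦ pow_eq_one_of_mem_roots_charpoly hM) hα (hcard ▸ htrace)).imp_right fun heq ↦ ?_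
  obtain ⟨c, hc⟩ : ∃ c, ∀ x ∈ M.charpoly.roots, x = c := by
    rcases M.charpoly.roots.empty_or_exists_mem with h0 | ⟨c, hc⟩
    · simp [h0]
    · exact ⟨c, fun x hx ↦ heq x hx c hc⟩
  have hcharpoly : M.charpoly = (X - C c) ^ Fintype.card ι := by
    rw [hsplits.eq_prod_roots_of_monic M.charpoly_monic, Multiset.eq_replicate.2 ⟨hcard, hc⟩]
    simp
  rw [eq_algebraMap_of_pow_eq_one_of_charpoly_eq (Nat.cast_ne_zero.2 hn) hM hcharpoly]
  exact Subalgebra.algebraMap_mem _ c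

end Matrix

section GroupAlgebra

open MonoidAlgebra

theorem trace_mulLeft_pi_matrix {R ι : Type*} [CommRing R] [Fintype ι] {n : ι → Type*}
    [∀ i, Fintype (n i)] (A : Π i, Matrix (n i) (n i) R) :
    LinearMap.trace R _ (LinearMap.mulLeft R A) = ∑ i, Fintype.card (n i) * (A i).trace := by
  classical
  rw [LinearMap.trace_eq_matrix_trace R (Pi.basis fun i ↦ Matrix.stdBasis R (n i) (n i)),
    Matrix.trace, Fintype.sum_sigma]
  refine Finset.sum_congr rfl fun i _ ↦ ?_
  simp only [Fintype.sum_prod_type, Matrix.diag_apply, LinearMap.toMatrix_apply,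
    LinearMap.mulLeft_apply, Pi.basis_repr, Pi.basis_apply, Pi.mul_apply, Pi.single_eq_same,
    Matrix.stdBasis_eq_single]
  simp [Matrix.trace, Matrix.stdBasis, Matrix.mul_apply, Matrix.single_apply, Finset.mul_sum]

theorem trace_mulLeft_monoidAlgebra {R G : Type*} [CommRing R] [Group G] [Fintype G] (a : R[G]) :
    LinearMap.trace R _ (LinearMap.mulLeft R a) = Fintype.card G * a.coeff 1 := by
  classical
  rw [LinearMap.trace_eq_matrix_trace R (MonoidAlgebra.basis G R), Matrix.trace]
  simp only [Matrix.diag_apply, LinearMap.toMatrix_apply, LinearMap.mulLeft_apply]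
  simp [MonoidAlgebra.basis]

theorem sum_card_mul_trace_eq_card_mul_coeff_one {R G ι : Type*} [CommRing R] [Group G]
    [Fintype G] [Fintype ι] {n : ι → Type*} [∀ i, Fintype (n i)] [∀ i, DecidableEq (n i)]
    (e : R[G] ≃ₐ[R] Π i, Matrix (n i) (n i) R) (a : R[G]) :
    ∑ i, Fintype.card (n i) * (e a i).trace = Fintype.card G * a.coeff 1 := by
  -- Both sides are the trace of left multiplication by `a`.
  have hconj : e.toLinearEquiv.conj (LinearMap.mulLeft R a) = LinearMap.mulLeft R (e a) := by
    ext1 x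
    simp [LinearEquiv.conj_apply]
  rw [← trace_mulLeft_pi_matrix, ← hconj, LinearMap.trace_conj', trace_mulLeft_monoidAlgebra]

theorem exists_map_eq_algebraMap_of_mem_center
    {R S A : Type*} [CommRing R] [Ring S] [Algebra R S] [Ring A] [Algebra R A]
    [Algebra.IsCentral R A] {φ : S →ₐ[R] A} (hφ : Function.Surjective φ) {z : S}
    (hz : z ∈ Subalgebra.center R S) : ∃ c : R, φ z = algebraMap R A c := by
  have hφz : φ z ∈ Subalgebra.center R A := Subalgebra.mem_center_iff.2 (hφ.forall.2 fun s ↦ by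
    rw [← map_mul, ← map_mul, Subalgebra.mem_center_iff.1 hz s])
  rw [Algebra.IsCentral.center_eq_bot, Algebra.mem_bot] at hφz
  obtain ⟨c, hc⟩ := hφz
  exact ⟨c, hc.symm⟩

theorem mem_center_of_forall_commute_of {R G : Type*} [CommSemiring R] [Monoid G] {z : R[G]}
    (hz : ∀ g, Commute (of R G g) z) : z ∈ Subalgebra.center R R[G] := by
  refine Subalgebra.mem_center_iff.2 fun a ↦ ?_
  induction a using MonoidAlgebra.induction_on with
  | of g => exact hz g
  | add a b ha hb => rw [add_mul, mul_add, ha, hb]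
  | smul r a ha => rw [smul_mul_assoc, mul_smul_comm, ha]

variable {R G : Type*} [CommRing R] [Group G]

section ClassSum

/-- The class sum of `g` in the group algebra: the sum of the conjugates of `g`. It is central and
integral over `ℤ`, so it acts on each simple component by an algebraic integer. -/
noncomputable def classSum (R : Type*) [CommRing R] {G : Type*} [Group G] (g : G)
    [Fintype (conjugatesOf g)] : R[G] :=
  ∑ x : conjugatesOf g, of R G x

variable (g : G) [Fintype (conjugatesOf g)]

theorem classSum_mem_center : classSum R g ∈ Subalgebra.center R R[G] := by
  refine mem_center_of_forall_commute_of fun h ↦ ?_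
  have hbij : Function.Bijective fun x : conjugatesOf g ↦
      (⟨h * x * h⁻¹, x.2.trans (isConj_iff.2 ⟨h, rfl⟩)⟩ : conjugatesOf g) :=
    Finite.injective_iff_bijective.1 fun x y hxy ↦
      Subtype.ext (by simpa using congrArg Subtype.val hxy)
  simp only [Commute, SemiconjBy, classSum, Finset.sum_mul, Finset.mul_sum]
  refine Fintype.sum_bijective _ hbij _ _ fun x ↦ ?_
  simp only [← map_mul, inv_mul_cancel_right]

theorem isIntegral_classSum [Finite G] : IsIntegral ℤ (classSum R g) := by
  have hbasis : Module.Finite ℤ ℤ[G] := .of_basis (MonoidAlgebra.basis G ℤ)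
  have hmap : (mapRingHom G (Int.castRingHom R)).toIntAlgHom (classSum ℤ g) = classSum R g := by
    simp [classSum, map_sum]
  exact hmap ▸ (IsIntegral.of_finite ℤ (classSum ℤ g)).map _

theorem trace_map_classSum {n : Type*} [Fintype n] [DecidableEq n] (φ : R[G] →ₐ[R] Matrix n n R) :
    (φ (classSum R g)).trace = Fintype.card (conjugatesOf g) * (φ (of R G g)).trace := by
  have hconj (x : conjugatesOf g) : (φ (of R G x)).trace = (φ (of R G g)).trace := by
    obtain ⟨h, hx⟩ := isConj_iff.1 x.2
    rw [← hx, map_mul, map_mul φ, Matrix.trace_mul_comm, ← map_mul φ, ← map_mul,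
      ← mul_assoc, inv_mul_cancel, one_mul]
  simp_rw [classSum, map_sum, Matrix.trace_sum, hconj, Finset.sum_const, Finset.card_univ,
    nsmul_eq_mul]

end ClassSum

theorem isIntegral_monoidAlgebra_of [Finite G] (g : G) : IsIntegral ℤ (of R G g) :=
  .of_pow Nat.card_pos (by rw [← map_pow, pow_card_eq_one', map_one]; exact isIntegral_one)

section Average

variable [Fintype G] [Invertible (Fintype.card G : R)]

open GroupAlgebra

theorem coeff_average (g : G) : (average R G).coeff g = ⅟(Fintype.card G : R) := by
  classical
  simp [average, Finsupp.single_apply]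

theorem average_mem_center : average R G ∈ Subalgebra.center R R[G] :=
  mem_center_of_forall_commute_of fun g ↦
    (mul_average_left R G g).trans (mul_average_right R G g).symm

theorem map_average_eq_one_of_forall_map_of_eq_one {A : Type*} [Ring A] [Algebra R A]
    {φ : R[G] →ₐ[R] A} (hφ : ∀ g, φ (of R G g) = 1) : φ (average R G) = 1 := by
  simp only [average, map_smul, map_sum, hφ, Finset.sum_const, Finset.card_univ]
  rw [← Nat.cast_smul_eq_nsmul R, smul_smul, invOf_mul_self, one_smul]

end Average

theorem map_average_eq_zero_or_forall_map_of_eq_one {K A : Type*} [Field K] [Fintype G]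
    [Invertible (Fintype.card G : K)] [Ring A] [Algebra K A] [Algebra.IsCentral K A]
    {φ : K[G] →ₐ[K] A} (hφ : Function.Surjective φ) :
    φ (GroupAlgebra.average K G) = 0 ∨ ∀ g, φ (of K G g) = 1 := by
  obtain ⟨c, hc⟩ := exists_map_eq_algebraMap_of_mem_center hφ average_mem_center
  rcases eq_or_ne c 0 with rfl | hc0
  · exact .inl (by rw [hc, map_zero])
  · refine .inr fun g ↦ ?_
    have hfix := congrArg φ (GroupAlgebra.mul_average_left K G g)
    rw [map_mul, hc, ← of_apply] at hfix
    exact ((IsUnit.mk0 c hc0).map (algebraMap K A)).mul_eq_right.1 hfix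

end GroupAlgebra

section Burnside

open MonoidAlgebra

open scoped commutatorElement

variable {G : Type*} [Group G] {g : G} {n : Type*} [Fintype n] [DecidableEq n]

theorem trace_map_of_eq_zero_or_mem_center [Finite G] {K : Type*} [Field K] [CharZero K]
    [IsAlgClosed K] {φ : K[G] →ₐ[K] Matrix n n K} (hφ : Function.Surjective φ)
    (hcop : (Nat.card (conjugatesOf g)).Coprime (Fintype.card n)) :
    (φ (of K G g)).trace = 0 ∨ φ (of K G g) ∈ Subalgebra.center K (Matrix n n K) := by
  have := Fintype.ofFinite (conjugatesOf g)
  rcases isEmpty_or_nonempty n with _ | _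
  · exact .inl (Matrix.trace_eq_zero_of_isEmpty _)
  obtain ⟨c, hc⟩ := exists_map_eq_algebraMap_of_mem_center hφ (classSum_mem_center g)
  have hcint : IsIntegral ℤ c := by
    have := (isIntegral_classSum (R := K) g).map (φ.restrictScalars ℤ)
    rw [AlgHom.restrictScalars_apply, hc] at this
    exact (isIntegral_algebraMap_iff (algebraMap K (Matrix n n K)).injective).1 this
  have htrace : Fintype.card n * c = Nat.card (conjugatesOf g) * (φ (of K G g)).trace := by
    rw [Nat.card_eq_fintype_card, ← trace_map_classSum, hc, Matrix.algebraMap_eq_diagonal,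
      Matrix.trace_diagonal]
    simp
  have hpow : φ (of K G g) ^ Nat.card G = 1 := by
    rw [← map_pow, ← map_pow, pow_card_eq_one', map_one, map_one]
  have htrint : IsIntegral ℤ (φ (of K G g)).trace :=
    isIntegral_trace_of_isIntegral ((isIntegral_monoidAlgebra_of g).map (φ.restrictScalars ℤ))
  obtain ⟨a, b, hab⟩ := Nat.isCoprime_iff_coprime.2 hcop
  have hab' : (a * Nat.card (conjugatesOf g) + b * Fintype.card n : K) = 1 := by exact_mod_cast hab
  refine trace_eq_zero_or_mem_center_of_pow_eq_one Nat.card_pos.ne' hpow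
    (α := a * c + b * (φ (of K G g)).trace) ?_ ?_
  · simpa only [zsmul_eq_mul] using (hcint.smul a).add (htrint.smul b)
  · linear_combination (a : K) * htrace + (φ (of K G g)).trace * hab'

theorem exists_isIntegral_card_mul_trace_sub_average {K : Type*} [Field K] [CharZero K]
    [IsAlgClosed K] [Fintype G] [Invertible (Fintype.card G : K)]
    {φ : K[G] →ₐ[K] Matrix n n K} (hφ : Function.Surjective φ) {p k : ℕ} (hp : p.Prime)
    (hcard : Nat.card (conjugatesOf g) = p ^ k)
    (htriv : φ (of K G g) ∈ Subalgebra.center K (Matrix n n K) → ∀ x, φ (of K G x) = 1) :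
    ∃ β, IsIntegral ℤ β ∧
      Fintype.card n * (φ (of K G g - GroupAlgebra.average K G)).trace = p * β := by
  by_cases hone : ∀ x, φ (of K G x) = 1
  · exact ⟨0, isIntegral_zero, by
      simp [-of_apply, hone, map_average_eq_one_of_forall_map_of_eq_one hone]⟩
  have havg : φ (GroupAlgebra.average K G) = 0 :=
    (map_average_eq_zero_or_forall_map_of_eq_one hφ).resolve_right hone
  rw [map_sub, havg, sub_zero]
  by_cases hdvd : p ∣ Fintype.card n
  · obtain ⟨m, hm⟩ := hdvd
    refine ⟨m * (φ (of K G g)).trace, ?_, by rw [hm, Nat.cast_mul, mul_assoc]⟩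
    rw [← nsmul_eq_mul]
    exact (isIntegral_trace_of_isIntegral
      ((isIntegral_monoidAlgebra_of g).map (φ.restrictScalars ℤ))).nsmul m
  · have hcop : (Nat.card (conjugatesOf g)).Coprime (Fintype.card n) :=
      hcard ▸ ((hp.coprime_iff_not_dvd).2 hdvd).pow_left k
    have htr := (trace_map_of_eq_zero_or_mem_center hφ hcop).resolve_right (mt htriv hone)
    exact ⟨0, isIntegral_zero, by rw [htr, mul_zero, mul_zero]⟩

theorem commutatorElement_mem_ker_of_commute {M : Type*} [MulOneClass M] {ρ : G →* M} {x : G}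
    (h : Commute (ρ g) (ρ x)) : ⁅g, x⁆ ∈ ρ.ker := by
  have hgx : ρ (g * x) = ρ (x * g) := by rw [map_mul, map_mul, h]
  rw [MonoidHom.mem_ker, commutatorElement_def, mul_assoc, ← mul_inv_rev, map_mul, hgx, ← map_mul,
    mul_inv_cancel, map_one]

theorem map_of_eq_one_of_mem_center {R A : Type*} [CommRing R] [Ring A] [Algebra R A]
    {φ : R[G] →ₐ[R] A} (hφ : φ (of R G g) ∈ Subalgebra.center R A)
    (hg : ∀ N : Subgroup G, N.Normal → (∀ x, ⁅g, x⁆ ∈ N) → N = ⊤) (x : G) :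
    φ (of R G x) = 1 := by
  let ρ : G →* A := (φ : R[G] →* A).comp (of R G)
  have hker : ρ.ker = ⊤ := hg ρ.ker inferInstance fun y ↦
    commutatorElement_mem_ker_of_commute (Subalgebra.mem_center_iff.1 hφ (ρ y)).symm
  exact MonoidHom.mem_ker.1 (hker ▸ Subgroup.mem_top x : x ∈ ρ.ker)

theorem exists_normal_ne_top_forall_commutator_mem [Finite G] (hg : g ≠ 1) {p k : ℕ}
    (hp : p.Prime) (hcard : Nat.card (conjugatesOf g) = p ^ k) :
    ∃ N : Subgroup G, N.Normal ∧ N ≠ ⊤ ∧ ∀ x, ⁅g, x⁆ ∈ N := by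
  by_contra! hnone
  have htop (N : Subgroup G) (hN : N.Normal) (hgN : ∀ x, ⁅g, x⁆ ∈ N) : N = ⊤ := by
    by_contra hne
    obtain ⟨x, hx⟩ := hnone N hN hne
    exact hx (hgN x)
  have := Fintype.ofFinite G
  have : FiniteDimensional ℂ ℂ[G] := .of_basis (MonoidAlgebra.basis G ℂ)
  have : NeZero (Nat.card G : ℂ) := ⟨Nat.cast_ne_zero.2 Nat.card_pos.ne'⟩
  let : Invertible (Fintype.card G : ℂ) := invertibleOfNonzero (by simp)
  obtain ⟨m, d, -, ⟨e⟩⟩ := IsSemisimpleRing.exists_algEquiv_pi_matrix_of_isAlgClosed ℂ ℂ[G]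
  have hcomponent (i : Fin m) : ∃ β, IsIntegral ℤ β ∧ Fintype.card (Fin (d i)) *
      (e (of ℂ G g - GroupAlgebra.average ℂ G) i).trace = p * β := by
    let φ := (Pi.evalAlgHom ℂ (fun i ↦ Matrix (Fin (d i)) (Fin (d i)) ℂ) i).comp e.toAlgHom
    have hφ : Function.Surjective φ := (Function.surjective_eval i).comp e.surjective
    exact exists_isIntegral_card_mul_trace_sub_average (φ := φ) hφ hp hcard
      fun hcenter ↦ map_of_eq_one_of_mem_center hcenter htop
  choose β hβint hβ using hcomponent
  have hsum : p * ∑ i, β i = -1 := by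
    rw [Finset.mul_sum, ← Finset.sum_congr rfl fun i _ ↦ hβ i,
      sum_card_mul_trace_eq_card_mul_coeff_one]
    simp [coeff_average, hg]
  have hinv : (p : ℂ)⁻¹ = -∑ i, β i :=
    inv_eq_of_mul_eq_one_right (by rw [mul_neg, hsum, neg_neg])
  exact not_isIntegral_inv_natCast (K := ℂ) hp.one_lt
    (hinv ▸ (IsIntegral.sum _ fun i _ ↦ hβint i).neg)

end Burnside

section SimpleGroup

variable {G : Type*} [Group G] [IsSimpleGroup G]

theorem center_eq_bot_of_exists_mul_ne_mul (hnab : ∃ a b : G, a * b ≠ b * a) :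
    Subgroup.center G = ⊥ := by
  refine (Subgroup.center G).normal_of_characteristic.eq_bot_or_eq_top.resolve_right fun htop ↦ ?_
  obtain ⟨a, b, hab⟩ := hnab
  exact hab (Subgroup.mem_center_iff.1 (htop ▸ Subgroup.mem_top b) a)

theorem finite_of_finite_conjugatesOf {g : G} (hg : g ∉ Subgroup.center G)
    (hfin : (conjugatesOf g).Finite) : Finite G := by
  have : Finite (MulAction.orbit (ConjAct G) g) := by
    rw [ConjAct.orbit_eq_carrier_conjClasses]
    exact hfin.to_subtype
  let ψ : G →* Equiv.Perm (MulAction.orbit (ConjAct G) g) :=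
    (MulAction.toPermHom (ConjAct G) _).comp ConjAct.toConjAct.toMonoidHom
  rcases ψ.normal_ker.eq_bot_or_eq_top with hbot | htop
  · exact Finite.of_injective ψ ((MonoidHom.ker_eq_bot_iff ψ).1 hbot)
  · refine absurd (Subgroup.mem_center_iff.2 fun x ↦ ?_) hg
    have hx : ψ x = 1 := MonoidHom.mem_ker.1 (htop ▸ Subgroup.mem_top x)
    have hfix : x * g * x⁻¹ = g :=
      congrArg Subtype.val (Equiv.congr_fun hx ⟨g, MulAction.mem_orbit_self g⟩)
    exact mul_inv_eq_iff_eq_mul.1 hfix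

open scoped commutatorElement in
theorem stmt_4_general (hnab : ∃ a b : G, a * b ≠ b * a) {g : G} {p k : ℕ} (hp : p.Prime)
    (hcard : Nat.card (conjugatesOf g) = p ^ k) : g = 1 := by
  have hcenter := center_eq_bot_of_exists_mul_ne_mul hnab
  by_contra hg
  have hgc : g ∉ Subgroup.center G := by rwa [hcenter, Subgroup.mem_bot]
  have hfin : (conjugatesOf g).Finite :=
    Nat.finite_of_card_ne_zero (hcard ▸ pow_ne_zero k hp.ne_zero)
  have := finite_of_finite_conjugatesOf hgc hfin
  obtain ⟨N, hN, hNtop, hgN⟩ := exists_normal_ne_top_forall_commutator_mem hg hp hcard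
  have hNbot : N = ⊥ := hN.eq_bot_or_eq_top.resolve_right hNtop
  refine hgc (Subgroup.mem_center_iff.2 fun x ↦ ?_)
  have hgx : ⁅g, x⁆ = 1 := by rw [← Subgroup.mem_bot, ← hNbot]; exact hgN x
  exact (commutatorElement_eq_one_iff_mul_comm.1 hgx).symm

end SimpleGroup

theorem stmt_4 (G : Type) [Group G] [Fintype G] [DecidableEq G]
    [IsSimpleGroup G] (hnab : ∃ a b : G, a * b ≠ b * a)
    (g : G) (p k : ℕ) (hp : p.Prime)
    (hcard : (Finset.univ.filter (fun x => IsConj g x)).card = p ^ k) :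
    g = 1 :=
  stmt_4_general hnab hp <|
    (Nat.subtype_card _ <| Finset.mem_filter_univ (p := IsConj g)).trans hcard
end

section
/- Let G be a finite group and g ∈ G, g ≠ 1, such that the conjugacy class of g has size q^l for a prime q and l ≥ 1. Then there exists a nontrivial irreducible character χ of G with q ∤ χ(1) and χ(g) ≠ 0. -/
open CategoryTheory

/-!
The regular character is `∑ χ, χ 1 * χ`, so `∑ χ, χ 1 * χ g = 0` for `g ≠ 1`. The trivial character
contributes `1` to this sum; hence a non-unit `a` of the ring of algebraic integers cannot divide
`χ 1 * χ g` for all nontrivial `χ`. For `a = q` this leaves some `χ` with `q ∤ χ 1` and `χ g ≠ 0`.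
-/

universe u v

section Integrality

variable {R K V : Type*} [CommRing R] [Field K] [Algebra R K] [AddCommGroup V] [Module K V]
  [Module R V] [IsScalarTower R K V]

theorem isIntegral_of_hasEigenvalue {f : Module.End K V} {μ : K} (hμ : f.HasEigenvalue μ)
    (hf : IsIntegral R f) : IsIntegral R μ := by
  obtain ⟨v, hv⟩ := hμ.exists_hasEigenvector
  obtain ⟨p, hp_monic, hp⟩ := hf
  have hpv : (p.map (algebraMap R K)).eval μ • v = 0 := by
    rw [← Module.End.aeval_apply_of_hasEigenvector hv, Polynomial.aeval_map_algebraMap,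
      Polynomial.aeval_def, hp, LinearMap.zero_apply]
  refine ⟨p, hp_monic, ?_⟩
  rw [← Polynomial.eval_map]
  exact (smul_eq_zero.mp hpv).resolve_right hv.2

theorem isIntegral_trace_of_isIntegral_s15 [IsAlgClosed K] [FiniteDimensional K V] {f : Module.End K V}
    (hf : IsIntegral R f) : IsIntegral R (LinearMap.trace K V f) := by
  rw [Module.End.trace_eq_sum_roots_charpoly_of_splits (IsAlgClosed.splits _)]
  refine IsIntegral.multiset_sum fun μ hμ ↦ isIntegral_of_hasEigenvalue ?_ hf
  exact (Module.End.hasEigenvalue_iff_isRoot_charpoly f μ).mpr (Polynomial.isRoot_of_mem_roots hμ)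

theorem isUnit_natCast_iff_eq_one {A : Type*} [CommRing A] [CharZero A] [Algebra.IsIntegral ℤ A]
    {n : ℕ} : IsUnit (n : A) ↔ n = 1 := by
  rw [← map_natCast (algebraMap ℤ A), isUnit_map_iff, Int.ofNat_isUnit, Nat.isUnit_iff]

end Integrality

section Representation

open Representation

theorem isIntegral_representation_character {k G V : Type*} [Field k] [IsAlgClosed k] [Group G]
    [Finite G] [AddCommGroup V] [Module k V] [FiniteDimensional k V] (ρ : Representation k G V)
    (g : G) : IsIntegral ℤ (ρ.character g) := by
  have hpow : ρ g ^ Nat.card G = 1 := by rw [← map_pow, pow_card_eq_one', map_one]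
  exact isIntegral_trace_of_isIntegral_s15 (.of_pow Nat.card_pos (hpow ▸ isIntegral_one))

section Decomposition

variable {k G V : Type*} [Field k] [Group G] [AddCommGroup V] [Module k V]

theorem nontrivial_subrepresentation [Nontrivial V] (ρ : Representation k G V) :
    Nontrivial (Subrepresentation ρ) :=
  ⟨⊥, ⊤, fun h ↦ bot_ne_top (congrArg Subrepresentation.toSubmodule h)⟩

theorem isIrreducible_of_finrank_eq_one (ρ : Representation k G V)
    (h : Module.finrank k V = 1) : ρ.IsIrreducible := by
  have : IsSimpleModule k V := isSimpleModule_iff_finrank_eq_one.mpr h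
  have : Nontrivial V := IsSimpleModule.nontrivial k V
  have := nontrivial_subrepresentation ρ
  refine ⟨fun σ ↦ (eq_bot_or_eq_top σ.toSubmodule).imp ?_ ?_⟩ <;>
    exact fun h ↦ Subrepresentation.toSubmodule_injective h

theorem isCompl_toSubmodule {ρ : Representation k G V} {σ τ : Subrepresentation ρ}
    (h : IsCompl σ τ) : IsCompl σ.toSubmodule τ.toSubmodule := by
  rw [isCompl_iff, disjoint_iff, codisjoint_iff] at h ⊢
  exact h.imp (congrArg Subrepresentation.toSubmodule) (congrArg Subrepresentation.toSubmodule)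

theorem character_eq_add_of_isCompl [FiniteDimensional k V] {ρ : Representation k G V}
    {σ τ : Subrepresentation ρ} (h : IsCompl σ τ) :
    ρ.character = σ.toRepresentation.character + τ.toRepresentation.character := by
  ext g
  let N : Bool → Submodule k V := fun i ↦ cond i σ.toSubmodule τ.toSubmodule
  have hN : DirectSum.IsInternal N :=
    (DirectSum.isInternal_submodule_iff_isCompl N (i := true) (j := false) (by decide)
      (by ext i; cases i <;> simp)).mpr (isCompl_toSubmodule h)
  have hρ : ∀ i, Set.MapsTo (ρ g) (N i) (N i)
    | true => σ.apply_mem_toSubmodule g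
    | false => τ.apply_mem_toSubmodule g
  have := LinearMap.trace_eq_sum_trace_restrict hN hρ
  rwa [Fintype.sum_bool] at this

theorem exists_isCompl_finrank_lt_of_not_isIrreducible [FiniteDimensional k V] [Nontrivial V]
    {ρ : Representation k G V} [ρ.IsSemisimpleRepresentation] (hρ : ¬ρ.IsIrreducible) :
    ∃ σ τ : Subrepresentation ρ, IsCompl σ τ ∧
      Module.finrank k σ.toSubmodule < Module.finrank k V ∧
      Module.finrank k τ.toSubmodule < Module.finrank k V := by
  have := nontrivial_subrepresentation ρ
  obtain ⟨σ, hσ_bot, hσ_top⟩ : ∃ σ : Subrepresentation ρ, σ ≠ ⊥ ∧ σ ≠ ⊤ := by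
    by_contra! h
    exact hρ ⟨fun σ ↦ or_iff_not_imp_left.mpr (h σ)⟩
  obtain ⟨τ, hστ⟩ := exists_isCompl σ
  have hτ_top : τ ≠ ⊤ := fun h ↦ hσ_bot (eq_bot_of_isCompl_top (h ▸ hστ))
  have finrank_lt : ∀ {π : Subrepresentation ρ}, π ≠ ⊤ →
      Module.finrank k π.toSubmodule < Module.finrank k V := fun hπ ↦
    Submodule.finrank_lt fun h ↦ hπ (Subrepresentation.toSubmodule_injective h)
  exact ⟨σ, τ, hστ, finrank_lt hσ_top, finrank_lt hτ_top⟩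

theorem character_leftRegular [Finite G] [DecidableEq G] (g : G) :
    (leftRegular k G).character g = if g = 1 then (Nat.card G : k) else 0 := by
  have := Fintype.ofFinite G
  let b : Module.Basis G k (MonoidAlgebra k G) := .ofRepr (MonoidAlgebra.coeffLinearEquiv k)
  have hb : ∀ x, b x = MonoidAlgebra.single x 1 := fun _ ↦ rfl
  have hb_repr : ∀ v x, b.repr v x = v.coeff x := fun _ _ ↦ rfl
  have hdiag : ∀ x, LinearMap.toMatrix b b (leftRegular k G g) x x = if g = 1 then 1 else 0 := by
    intro x
    rw [LinearMap.toMatrix_apply, hb, hb_repr, ofMulAction_single, MonoidAlgebra.coeff_single,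
      Finsupp.single_apply]
    simp only [smul_eq_mul, mul_eq_right]
  rw [character, LinearMap.trace_eq_matrix_trace k b, Matrix.trace]
  simp only [Matrix.diag_apply, hdiag]
  split_ifs <;> simp

end Decomposition

theorem simple_of_isIrreducible {k G V : Type u} [Field k] [IsAlgClosed k] [Group G] [Finite G]
    [NeZero (Nat.card G : k)] [AddCommGroup V] [Module k V] [FiniteDimensional k V]
    (ρ : Representation k G V) [ρ.IsIrreducible] : Simple (FDRep.of ρ) := by
  rw [FDRep.simple_iff_end_is_rank_one,
    ← (linHom.invariantsEquivFDRepHom (FDRep.of ρ) (FDRep.of ρ)).finrank_eq, FDRep.of_ρ',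
    (invariantsEquivIntertwiningMap ρ ρ).finrank_eq]
  exact IsIrreducible.finrank_intertwiningMap_self ρ

end Representation

section CharacterPairing

variable (k G : Type*) [Field k] [Group G] [Fintype G]

/-- The normalized pairing `⟨φ, ψ⟩ = |G|⁻¹ ∑ g, φ g * ψ g⁻¹` of functions on `G`, for which the
irreducible characters are orthonormal. It is bilinear: inverting the argument of `ψ` replaces the
complex conjugation of the usual inner product, so that it makes sense over any field. -/
noncomputable def characterPairing : LinearMap.BilinForm k (G → k) :=
  (Nat.card G : k)⁻¹ • (dotProductBilin k k).compl₂ (LinearMap.funLeft k k (·⁻¹))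

variable {k G}

theorem characterPairing_apply (φ ψ : G → k) :
    characterPairing k G φ ψ = (Nat.card G : k)⁻¹ * ∑ g, φ g * ψ g⁻¹ :=
  rfl

theorem characterPairing_character_leftRegular [NeZero (Nat.card G : k)] (φ : G → k) :
    characterPairing k G (Representation.leftRegular k G).character φ = φ 1 := by
  classical
  simp only [characterPairing_apply, character_leftRegular, ite_mul, zero_mul,
    Finset.sum_ite_eq', Finset.mem_univ, if_true, inv_one]
  exact inv_mul_cancel_left₀ (NeZero.ne _) _

end CharacterPairing

/-- The set of characters of the simple objects of `FDRep k G`, as functions on `G`: isomorphic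
representations give the same element. -/
def irreducibleCharacters (k : Type u) (G : Type v) [Field k] [Group G] : Set (G → k) :=
  {χ | ∃ V : FDRep k G, Simple V ∧ V.character = χ}

section Orthonormality

variable {k : Type u} {G : Type v} [Field k] [IsAlgClosed k] [Group G]

theorem characterPairing_of_mem_irreducibleCharacters [Fintype G] [NeZero (Nat.card G : k)]
    [DecidableEq (G → k)] {χ ψ : G → k} (hχ : χ ∈ irreducibleCharacters k G)
    (hψ : ψ ∈ irreducibleCharacters k G) :
    characterPairing k G χ ψ = if χ = ψ then 1 else 0 := by
  classical
  have := invertibleOfNonzero (NeZero.ne (Nat.card G : k))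
  obtain ⟨V, hV, rfl⟩ := hχ
  obtain ⟨W, hW, rfl⟩ := hψ
  rw [characterPairing_apply]
  split_ifs with h
  · rw [← h, FDRep.char_orthonormal, if_pos ⟨Iso.refl V⟩]
  · rw [FDRep.char_orthonormal, if_neg fun ⟨e⟩ ↦ h (FDRep.char_iso e)]

theorem linearIndependent_irreducibleCharacters [Finite G] [NeZero (Nat.card G : k)] :
    LinearIndependent k ((↑) : irreducibleCharacters k G → G → k) := by
  classical
  have := Fintype.ofFinite G
  refine LinearMap.linearIndependent_of_isOrthoᵢ (B := characterPairing k G) ?_ ?_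
  · intro χ ψ h
    exact (characterPairing_of_mem_irreducibleCharacters χ.2 ψ.2).trans
      (if_neg (Subtype.coe_injective.ne h))
  · intro χ
    rw [characterPairing_of_mem_irreducibleCharacters χ.2 χ.2, if_pos rfl]
    exact one_ne_zero

instance finite_irreducibleCharacters [Finite G] [NeZero (Nat.card G : k)] :
    Finite (irreducibleCharacters k G) :=
  linearIndependent_irreducibleCharacters.finite

theorem eq_sum_characterPairing_smul [Fintype G] [NeZero (Nat.card G : k)]
    [Fintype (irreducibleCharacters k G)] {φ : G → k}
    (hφ : φ ∈ Submodule.span k (irreducibleCharacters k G)) :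
    φ = ∑ χ : irreducibleCharacters k G, characterPairing k G φ χ • (χ : G → k) := by
  classical
  rw [← Subtype.range_coe (s := irreducibleCharacters k G),
    Submodule.mem_span_range_iff_exists_fun] at hφ
  obtain ⟨c, rfl⟩ := hφ
  refine Finset.sum_congr rfl fun χ _ ↦ ?_
  simp [characterPairing_of_mem_irreducibleCharacters _ χ.2, Subtype.coe_inj]

end Orthonormality

section ColumnOrthogonality

variable {k G : Type u} [Field k] [IsAlgClosed k] [Group G] [Finite G] [NeZero (Nat.card G : k)]

section

variable {V : Type u} [AddCommGroup V] [Module k V] [FiniteDimensional k V]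

theorem character_mem_irreducibleCharacters (ρ : Representation k G V) [ρ.IsIrreducible] :
    ρ.character ∈ irreducibleCharacters k G :=
  ⟨FDRep.of ρ, simple_of_isIrreducible ρ, rfl⟩

theorem character_mem_span_irreducibleCharacters (ρ : Representation k G V) :
    ρ.character ∈ Submodule.span k (irreducibleCharacters k G) := by
  induction hn : Module.finrank k V using Nat.strong_induction_on generalizing V with
  | _ n ih =>
    subst hn
    rcases subsingleton_or_nontrivial V with hV | hV
    · have hzero : ρ.character = 0 := by
        ext g
        rw [Representation.character, Subsingleton.elim (ρ g) 0, map_zero, Pi.zero_apply]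
      exact hzero ▸ zero_mem _
    by_cases hρ : ρ.IsIrreducible
    · exact Submodule.subset_span (character_mem_irreducibleCharacters ρ)
    · obtain ⟨σ, τ, hστ, hσ, hτ⟩ := exists_isCompl_finrank_lt_of_not_isIrreducible hρ
      rw [character_eq_add_of_isCompl hστ]
      exact add_mem (ih _ hσ _ rfl) (ih _ hτ _ rfl)

end

theorem const_one_mem_irreducibleCharacters :
    Function.const G 1 ∈ irreducibleCharacters k G := by
  have := isIrreducible_of_finrank_eq_one (Representation.trivial k G k) (Module.finrank_self k)
  convert! character_mem_irreducibleCharacters (Representation.trivial k G k)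
  ext g
  simp [Representation.character]

theorem sum_irreducibleCharacters_one_mul_apply [Fintype (irreducibleCharacters k G)]
    [DecidableEq G] (g : G) :
    ∑ χ : irreducibleCharacters k G, χ.1 1 * χ.1 g = if g = 1 then (Nat.card G : k) else 0 := by
  have := Fintype.ofFinite G
  have h := eq_sum_characterPairing_smul
    (character_mem_span_irreducibleCharacters (Representation.leftRegular k G))
  simpa [characterPairing_character_leftRegular, character_leftRegular] using (congrFun h g).symm

end ColumnOrthogonality

section IntegralValues

/-- The value `χ g` of an irreducible character, as an algebraic integer. -/
def integralValue {k : Type u} {G : Type v} [Field k] [IsAlgClosed k] [Group G] [Finite G]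
    (χ : irreducibleCharacters k G) (g : G) : integralClosure ℤ k :=
  ⟨χ.1 g, by
    obtain ⟨_, V, -, rfl⟩ := χ
    exact isIntegral_representation_character V.ρ g⟩

variable {k G : Type u} [Field k] [IsAlgClosed k] [Group G] [Finite G] [NeZero (Nat.card G : k)]

theorem sum_integralValue_one_mul_eq_zero [Fintype (irreducibleCharacters k G)] {g : G}
    (hg : g ≠ 1) : ∑ χ : irreducibleCharacters k G, integralValue χ 1 * integralValue χ g = 0 := by
  classical
  ext
  simpa [integralValue, hg] using sum_irreducibleCharacters_one_mul_apply (k := k) g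

theorem exists_not_dvd_integralValue_one_mul {g : G} (hg : g ≠ 1) {a : integralClosure ℤ k}
    (ha : ¬IsUnit a) : ∃ χ : irreducibleCharacters k G, (χ : G → k) ≠ Function.const G 1 ∧
      ¬a ∣ integralValue χ 1 * integralValue χ g := by
  classical
  have := Fintype.ofFinite (irreducibleCharacters k G)
  by_contra! h
  let χ₁ : irreducibleCharacters k G := ⟨_, const_one_mem_irreducibleCharacters⟩
  have hχ₁ : integralValue χ₁ 1 * integralValue χ₁ g = 1 := by
    ext
    simp [χ₁, integralValue]
  have hrest : a ∣ ∑ χ ∈ Finset.univ.erase χ₁, integralValue χ 1 * integralValue χ g :=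
    Finset.dvd_sum fun χ hχ ↦ h χ (Subtype.coe_injective.ne (Finset.ne_of_mem_erase hχ))
  have hsum := sum_integralValue_one_mul_eq_zero (k := k) hg
  rw [← Finset.add_sum_erase _ _ (Finset.mem_univ χ₁), hχ₁] at hsum
  exact ha (isUnit_of_dvd_one ((dvd_add_left hrest).mp (hsum ▸ dvd_zero a)))

end IntegralValues

theorem stmt_15_general {k G : Type u} [Field k] [IsAlgClosed k] [CharZero k] [Group G] [Finite G]
    {g : G} (hg : g ≠ 1) {q : ℕ} (hq : q ≠ 1) :
    ∃ V : FDRep k G, Simple V ∧ V.character ≠ Function.const G 1 ∧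
      ¬ q ∣ Module.finrank k V ∧ V.character g ≠ 0 := by
  have hq_unit : ¬IsUnit (q : integralClosure ℤ k) := isUnit_natCast_iff_eq_one.not.mpr hq
  obtain ⟨⟨_, V, hV, rfl⟩, hne, hdvd⟩ := exists_not_dvd_integralValue_one_mul hg hq_unit
  refine ⟨V, hV, hne, fun hq_dvd ↦ hdvd (Dvd.dvd.mul_right ?_ _), fun hzero ↦ hdvd ?_⟩
  · have hdegree : integralValue ⟨_, V, hV, rfl⟩ 1 = (Module.finrank k V : integralClosure ℤ k) :=
      Subtype.ext (by simp [integralValue])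
    rw [hdegree]
    exact Nat.cast_dvd_cast hq_dvd
  · have hvalue : integralValue ⟨_, V, hV, rfl⟩ g = 0 := Subtype.ext hzero
    rw [hvalue, mul_zero]
    exact dvd_zero _

theorem stmt_15 (G : Type) [Group G] [Fintype G] [DecidableEq G]
    (g : G) (hg : g ≠ 1) (q l : ℕ) (hq : q.Prime) (hl : 1 ≤ l)
    (hcard : (Finset.univ.filter (fun x => IsConj g x)).card = q ^ l) :
    ∃ V : FDRep ℂ G, Simple V ∧ V.character ≠ Function.const G 1 ∧
      ¬ q ∣ Module.finrank ℂ V ∧ V.character g ≠ 0 :=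
  stmt_15_general hg hq.ne_one
end
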